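/- arXiv:math/0604250 — 2 statements merged into one kernel-verified Lean document; each statement's English description precedes it below -/
import Mathlib

section
/- Let F be a symmetric subset of the unitary group U(ℓ₂), closed in the strong operator topology, and let (Uₙ) be a sequence of unitaries such that U(ℓ₂) is generated as a group by F together with {Uₙ : n ∈ ℕ}. Then there is a finite n such that (F ∪ {1, U₀, U₀*, ..., Uₙ, Uₙ*})ⁿ = U(ℓ₂). -/
open Pointwise

section BoundedGen
variable {H : Type*} [NormedAddCommGroup H] [InnerProductSpace ℂ H]

theorem BG_countable [TopologicalSpace.SeparableSpace H] {ι : Type*} {e : ι → H}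
    (he : Orthonormal ℂ e) : Countable ι := by
  refine Pairwise.countable_of_isOpen_disjoint (s := fun i => Metric.ball (e i) (1/2)) ?_
    (fun i => Metric.isOpen_ball) (fun i => ⟨e i, by simp⟩)
  intro i j hij
  refine Metric.ball_disjoint_ball ?_
  rw [dist_eq_norm]
  have h : ‖e i - e j‖ ^ 2 = 2 := by
    rw [@norm_sub_sq ℂ, he.1 i, he.1 j, he.2 hij]
    norm_num
  nlinarith [norm_nonneg (e i - e j)]

/-- a separable infinite dimensional Hilbert space has a basis indexed by any countable
infinite type -/
theorem BG_basis [CompleteSpace H] [TopologicalSpace.SeparableSpace H]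
    (hH : ¬ FiniteDimensional ℂ H) (ι : Type*) [Countable ι] [Infinite ι] :
    Nonempty (HilbertBasis ι ℂ H) := by
  obtain ⟨w, b, hb⟩ := exists_hilbertBasis ℂ H
  have hc : Countable w := BG_countable b.orthonormal
  have hi : Infinite w := by
    by_contra h
    rw [not_infinite_iff_finite] at h
    have := Fintype.ofFinite w
    exact hH (Module.Finite.of_basis b.toOrthonormalBasis.toBasis)
  obtain ⟨σ⟩ := nonempty_equiv_of_countable (α := ι) (β := w)
  have ho : Orthonormal ℂ (b ∘ σ) := b.orthonormal.comp _ σ.injective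
  refine ⟨HilbertBasis.mk ho ?_⟩
  have : Set.range (b ∘ σ) = Set.range b := by
    rw [Set.range_comp, σ.surjective.range_eq, Set.image_univ]
  rw [this, b.dense_span]

theorem BG_orth_infinite {ι : Type*} (e : ι → H) (x : ℕ → H) (hx : Orthonormal ℂ x)
    (hex : ∀ i n, inner ℂ (e i) (x n) = 0) :
    ¬ FiniteDimensional ℂ ((Submodule.span ℂ (Set.range e))ᗮ : Submodule ℂ H) := by
  intro hf
  have hmem : ∀ n, x n ∈ (Submodule.span ℂ (Set.range e))ᗮ := by
    intro n
    rw [Submodule.mem_orthogonal]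
    intro u hu
    induction hu using Submodule.span_induction with
    | mem y hy => obtain ⟨i, rfl⟩ := hy; exact hex i n
    | zero => simp
    | add a b _ _ ha hb => rw [inner_add_left, ha, hb, add_zero]
    | smul c a _ ha => rw [inner_smul_left, ha, mul_zero]
  let y : ℕ → ((Submodule.span ℂ (Set.range e))ᗮ : Submodule ℂ H) := fun n => ⟨x n, hmem n⟩
  have hl : LinearIndependent ℂ y := by
    apply LinearIndependent.of_comp (Submodule.subtype _)
    exact hx.linearIndependent
  have := hl.finite
  exact not_finite ℕ

theorem BG_complete_basis [CompleteSpace H] [TopologicalSpace.SeparableSpace H]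
    {ι : Type*} (e : ι → H) (he : Orthonormal ℂ e) (x : ℕ → H) (hx : Orthonormal ℂ x)
    (hex : ∀ i n, inner ℂ (e i) (x n) = 0) :
    ∃ b : HilbertBasis (ι ⊕ ℕ) ℂ H, ∀ i, b (Sum.inl i) = e i := by
  set K := (Submodule.span ℂ (Set.range e))ᗮ with hK
  have hinf : ¬ FiniteDimensional ℂ K := BG_orth_infinite e x hx hex
  obtain ⟨c⟩ := BG_basis hinf ℕ
  have hc := c.orthonormal
  let f : ι ⊕ ℕ → H := Sum.elim e (fun n => (c n : H))
  have h0 : ∀ i n, inner ℂ (e i) (c n : H) = 0 := fun i n =>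
    (Submodule.mem_orthogonal _ _).1 (c n).2 _ (Submodule.subset_span ⟨i, rfl⟩)
  have hf : Orthonormal ℂ f := by
    refine ⟨?_, ?_⟩
    · rintro (i | n)
      · exact he.1 i
      · exact hc.1 n
    · rintro (i | n) (j | m) hij
      · exact he.2 (fun h => hij (by rw [h]))
      · exact h0 i m
      · exact inner_eq_zero_symm.1 (h0 j n)
      · exact hc.2 (fun h => hij (by rw [h]))
  have hbot : (Submodule.span ℂ (Set.range f))ᗮ = ⊥ := by
    rw [Submodule.eq_bot_iff]
    intro y hy
    rw [Submodule.mem_orthogonal] at hy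
    have hyK : y ∈ K := by
      rw [hK, Submodule.mem_orthogonal]
      intro u hu
      refine hy u (Submodule.span_mono ?_ hu)
      rintro _ ⟨i, rfl⟩
      exact ⟨Sum.inl i, rfl⟩
    have : c.repr ⟨y, hyK⟩ = 0 := by
      ext n
      rw [c.repr_apply_apply]
      exact hy _ (Submodule.subset_span ⟨Sum.inr n, rfl⟩)
    have h2 : (⟨y, hyK⟩ : K) = 0 := by simpa using this
    exact congrArg Subtype.val h2
  refine ⟨HilbertBasis.mkOfOrthogonalEqBot hf hbot, fun i => ?_⟩
  rw [HilbertBasis.coe_mkOfOrthogonalEqBot]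
  rfl

theorem BG_extend [CompleteSpace H] [TopologicalSpace.SeparableSpace H]
    {ι : Type*} (e f : ι → H) (he : Orthonormal ℂ e) (hf : Orthonormal ℂ f)
    (x y : ℕ → H) (hx : Orthonormal ℂ x) (hy : Orthonormal ℂ y)
    (hex : ∀ i n, inner ℂ (e i) (x n) = 0) (hfy : ∀ i n, inner ℂ (f i) (y n) = 0) :
    ∃ g : H ≃ₗᵢ[ℂ] H, ∀ i, g (e i) = f i := by
  classical
  obtain ⟨b, hb⟩ := BG_complete_basis e he x hx hex
  obtain ⟨c, hc⟩ := BG_complete_basis f hf y hy hfy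
  refine ⟨b.repr.trans c.repr.symm, fun i => ?_⟩
  rw [← hb, ← hc, LinearIsometryEquiv.trans_apply, b.repr_self, c.repr_symm_single]

/-- in the span of a sequence there is a unit vector orthogonal to a finite set -/
theorem BG_unit (a : ℕ → H) (ha : Orthonormal ℂ a) (s : Finset H) :
    ∃ x ∈ Submodule.span ℂ (Set.range a), ‖x‖ = 1 ∧ ∀ y ∈ s, inner ℂ y x = 0 := by
  let φ : Submodule.span ℂ (Set.range a) →ₗ[ℂ] (s → ℂ) :=
    LinearMap.pi (fun y => (innerSL ℂ (y : H)).toLinearMap ∘ₗ Submodule.subtype _)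
  have hφ : ¬ Function.Injective φ := by
    intro h
    have hfin := Module.Finite.of_injective φ h
    have hl := (Module.Basis.span ha.linearIndependent).linearIndependent.finite
    exact not_finite ℕ
  rw [← LinearMap.ker_eq_bot, Submodule.eq_bot_iff] at hφ
  push Not at hφ
  obtain ⟨x, hx, hx0⟩ := hφ
  have hn : ‖(x : H)‖ ≠ 0 := by simpa using hx0
  refine ⟨((‖(x : H)‖ : ℂ)⁻¹) • (x : H), Submodule.smul_mem _ _ x.2, ?_, ?_⟩
  · rw [norm_smul, norm_inv, Complex.norm_real, norm_norm, inv_mul_cancel₀ hn]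
  · intro y hy
    have := congrFun (LinearMap.mem_ker.1 hx) ⟨y, hy⟩
    have h2 : inner ℂ y (x : H) = 0 := this
    rw [inner_smul_right, h2, mul_zero]

theorem BG_span_orth (a : ℕ → H) (z x : H) (hx : x ∈ Submodule.span ℂ (Set.range a))
    (h : ∀ n, inner ℂ z (a n) = 0) : inner ℂ z x = 0 := by
  induction hx using Submodule.span_induction with
  | mem y hy => obtain ⟨i, rfl⟩ := hy; exact h i
  | zero => simp
  | add a b _ _ ha hb => rw [inner_add_right, ha, hb, add_zero]
  | smul c a _ ha => rw [inner_smul_right, ha, mul_zero]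

theorem BG_seq (a c : ℕ → H) (ha : Orthonormal ℂ a) (hc : Orthonormal ℂ c) (u : H ≃ₗᵢ[ℂ] H) :
    ∃ a' c' : ℕ → H, Orthonormal ℂ a' ∧ Orthonormal ℂ c' ∧
      (∀ n, a' n ∈ Submodule.span ℂ (Set.range a)) ∧
      (∀ n, c' n ∈ Submodule.span ℂ (Set.range c)) ∧
      ∀ m n, inner ℂ (u (a' m)) (c' n) = 0 := by
  classical
  obtain ⟨f, hP, hr⟩ := exists_seq_of_forall_finset_exists
    (fun p : H × H => p.1 ∈ Submodule.span ℂ (Set.range a) ∧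
      p.2 ∈ Submodule.span ℂ (Set.range c) ∧ ‖p.1‖ = 1 ∧ ‖p.2‖ = 1 ∧ inner ℂ (u p.1) p.2 = 0)
    (fun p q : H × H => inner ℂ p.1 q.1 = 0 ∧ inner ℂ p.2 q.2 = 0 ∧
      inner ℂ p.2 (u q.1) = 0 ∧ inner ℂ (u p.1) q.2 = 0) (by
    intro s _
    obtain ⟨x, hx, hx1, hxs⟩ := BG_unit a ha (s.image Prod.fst ∪ s.image (fun p => u.symm p.2))
    obtain ⟨y, hy, hy1, hys⟩ := BG_unit c hc
      (insert (u x) (s.image Prod.snd ∪ s.image (fun p => u p.1)))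
    refine ⟨(x, y), ⟨hx, hy, hx1, hy1, hys _ (by simp)⟩, ?_⟩
    intro p hp
    refine ⟨hxs _ ?_, hys _ ?_, ?_, hys _ ?_⟩
    · exact Finset.mem_union_left _ (Finset.mem_image_of_mem _ hp)
    · exact Finset.mem_insert_of_mem (Finset.mem_union_left _ (Finset.mem_image_of_mem _ hp))
    · have := hxs (u.symm p.2)
        (Finset.mem_union_right _ (Finset.mem_image_of_mem (fun p => u.symm p.2) hp))
      rw [← u.inner_map_map] at this
      simpa using this
    · exact Finset.mem_insert_of_mem
        (Finset.mem_union_right _ (Finset.mem_image_of_mem (fun p => u p.1) hp)))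
  refine ⟨fun n => (f n).1, fun n => (f n).2, ⟨fun n => (hP n).2.2.1, ?_⟩,
    ⟨fun n => (hP n).2.2.2.1, ?_⟩, fun n => (hP n).1, fun n => (hP n).2.1, ?_⟩
  · intro m n hmn
    rcases lt_or_gt_of_ne hmn with h | h
    · exact (hr _ _ h).1
    · exact inner_eq_zero_symm.1 (hr _ _ h).1
  · intro m n hmn
    rcases lt_or_gt_of_ne hmn with h | h
    · exact (hr _ _ h).2.1
    · exact inner_eq_zero_symm.1 (hr _ _ h).2.1
  · intro m n
    rcases lt_trichotomy m n with h | h | h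
    · exact (hr _ _ h).2.2.2
    · subst h; exact (hP m).2.2.2.2
    · exact inner_eq_zero_symm.1 (hr _ _ h).2.2.1

theorem BG_sum_orthonormal {ι κ : Type*} {e : ι → H} {f : κ → H} (he : Orthonormal ℂ e)
    (hf : Orthonormal ℂ f) (h : ∀ i j, inner ℂ (e i) (f j) = 0) :
    Orthonormal ℂ (Sum.elim e f) := by
  refine ⟨?_, ?_⟩
  · rintro (i | n)
    · exact he.1 i
    · exact hf.1 n
  · rintro (i | n) (j | m) hij
    · exact he.2 (fun h => hij (by rw [h]))
    · exact h i m
    · exact inner_eq_zero_symm.1 (h j n)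
    · exact hf.2 (fun h => hij (by rw [h]))

/-- the key factorisation -/
theorem BG_factor [CompleteSpace H] [TopologicalSpace.SeparableSpace H]
    (a b c : ℕ → H) (ha : Orthonormal ℂ a) (hb : Orthonormal ℂ b) (hc : Orthonormal ℂ c)
    (hab : ∀ i j, inner ℂ (a i) (b j) = 0) (hac : ∀ i j, inner ℂ (a i) (c j) = 0)
    (hcb : ∀ i j, inner ℂ (c i) (b j) = 0) (u : H ≃ₗᵢ[ℂ] H) :
    ∃ h k g₁ g₂ : H ≃ₗᵢ[ℂ] H, (∀ n, h (a n) = a n) ∧ (∀ n, k (c n) = c n) ∧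
      (∀ n, g₁ (c n) = c n) ∧ (∀ n, g₂ (a n) = a n) ∧
      u = h⁻¹ * g₁ * h * (k⁻¹ * g₂ * k) := by
  obtain ⟨a', c', ha', hc', haa, hcc, huc⟩ := BG_seq a c ha hc u
  have h2 : Function.Injective (fun n : ℕ => 2 * n) := fun m n h => by simp at h; exact h
  have h3 : Function.Injective (fun n : ℕ => 2 * n + 1) := fun m n h => by simp at h; exact h
  have hce : Orthonormal ℂ (fun n => c' (2 * n)) := hc'.comp _ h2
  have hco : Orthonormal ℂ (fun n => c' (2 * n + 1)) := hc'.comp _ h3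
  have hua : Orthonormal ℂ (fun n => u (a' n)) := ha'.comp_linearIsometryEquiv u
  have hac' : ∀ i j, inner ℂ (a i) (c' j) = 0 := fun i j =>
    BG_span_orth c _ _ (hcc j) (fun n => hac i n)
  have ha'c' : ∀ i j, inner ℂ (a' i) (c' j) = 0 := fun i j =>
    inner_eq_zero_symm.1 (BG_span_orth a _ _ (haa i) (fun n => inner_eq_zero_symm.1 (hac' n j)))
  have ha'c : ∀ i j, inner ℂ (a' i) (c j) = 0 := fun i j =>
    inner_eq_zero_symm.1 (BG_span_orth a _ _ (haa i) (fun n => inner_eq_zero_symm.1 (hac n j)))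
  have ha'b : ∀ i j, inner ℂ (a' i) (b j) = 0 := fun i j =>
    inner_eq_zero_symm.1 (BG_span_orth a _ _ (haa i) (fun n => inner_eq_zero_symm.1 (hab n j)))
  have hc'b : ∀ i j, inner ℂ (c' i) (b j) = 0 := fun i j =>
    inner_eq_zero_symm.1 (BG_span_orth c _ _ (hcc i) (fun n => inner_eq_zero_symm.1 (hcb n j)))
  obtain ⟨v, hv⟩ := BG_extend (Sum.elim (fun n => u (a' n)) (fun n => c' (2 * n)))
    (Sum.elim a' (fun n => c' (2 * n)))
    (BG_sum_orthonormal hua hce (fun i j => huc i _))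
    (BG_sum_orthonormal ha' hce (fun i j => ha'c' i _))
    (fun n => c' (2 * n + 1)) b hco hb
    (by rintro (i | i) n
        · exact huc i _
        · exact hc'.2 (by omega))
    (by rintro (i | i) n
        · exact ha'b i n
        · exact hc'b _ n)
  obtain ⟨h, hh⟩ := BG_extend (Sum.elim a (fun n => c' (2 * n))) (Sum.elim a c)
    (BG_sum_orthonormal ha hce (fun i j => hac' i _))
    (BG_sum_orthonormal ha hc hac) b b hb hb
    (by rintro (i | i) n
        · exact hab i _
        · exact hc'b _ _)
    (by rintro (i | i) n
        · exact hab i n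
        · exact hcb _ n)
  obtain ⟨k, hk⟩ := BG_extend (Sum.elim a' c) (Sum.elim a c)
    (BG_sum_orthonormal ha' hc ha'c)
    (BG_sum_orthonormal ha hc hac) b b hb hb
    (by rintro (i | i) n
        · exact ha'b i _
        · exact hcb _ _)
    (by rintro (i | i) n
        · exact hab i n
        · exact hcb _ n)
  have hvi : ∀ n, v⁻¹ (c' (2 * n)) = c' (2 * n) := fun n => by
    have := hv (Sum.inr n)
    simp only [Sum.elim_inr] at this
    conv_lhs => rw [← this]
    exact v.symm_apply_apply _
  refine ⟨h, k, h * v⁻¹ * h⁻¹, k * (v * u) * k⁻¹, fun n => hh (Sum.inl n),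
    fun n => hk (Sum.inr n), fun n => ?_, fun n => ?_, by group⟩
  · have e1 := hh (Sum.inr n)
    simp only [Sum.elim_inr] at e1
    have e2 : h⁻¹ (c n) = c' (2 * n) := by rw [← e1]; exact h.symm_apply_apply _
    change h (v⁻¹ (h⁻¹ (c n))) = c n
    rw [e2, hvi, e1]
  · have e1 := hk (Sum.inl n)
    simp only [Sum.elim_inl] at e1
    have e2 : k⁻¹ (a n) = a' n := by rw [← e1]; exact k.symm_apply_apply _
    have e3 := hv (Sum.inl n)
    simp only [Sum.elim_inl] at e3
    change k (v (u (k⁻¹ (a n)))) = a n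
    rw [e2, e3, e1]


theorem BG_V [CompleteSpace H] [TopologicalSpace.SeparableSpace H]
    (hH : ¬ FiniteDimensional ℂ H) :
    ∃ V : ℕ × ℤ → (H →ₗᵢ[ℂ] H), IsHilbertSum ℂ (fun _ : ℕ × ℤ => H) V := by
  classical
  obtain ⟨b⟩ := BG_basis hH ℕ
  obtain ⟨d⟩ := BG_basis hH ((ℕ × ℤ) × ℕ)
  have ho : ∀ j : ℕ × ℤ, Orthonormal ℂ (fun k : ℕ => d (j, k)) := fun j =>
    d.orthonormal.comp (fun k : ℕ => (j, k)) (fun k l h => by simpa using h)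
  let V : ℕ × ℤ → (H →ₗᵢ[ℂ] H) := fun j =>
    ((ho j).orthogonalFamily.linearIsometry).comp b.repr.toLinearIsometry
  have hV : ∀ j k, V j (b k) = d (j, k) := by
    intro j k
    change (ho j).orthogonalFamily.linearIsometry (b.repr (b k)) = _
    rw [b.repr_self, OrthogonalFamily.linearIsometry_apply_single]
    simp
  refine ⟨V, IsHilbertSum.mk ?_ ?_⟩
  · intro i j hij
    have hdense : Dense (Submodule.span ℂ (Set.range b) : Set H) :=
      (Submodule.dense_iff_topologicalClosure_eq_top).2 b.dense_span
    have h1 : ∀ k, ∀ y, inner ℂ (V i (b k)) (V j y) = 0 := by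
      intro k
      have : (innerSL ℂ (V i (b k))).comp (V j).toContinuousLinearMap = 0 := by
        refine ContinuousLinearMap.ext_on hdense ?_
        rintro _ ⟨l, rfl⟩
        change inner ℂ (V i (b k)) (V j (b l)) = 0
        rw [hV, hV]
        exact d.orthonormal.2 (fun h => hij (by simpa using congrArg Prod.fst h))
      intro y
      exact congrArg (fun f => f y) this
    intro x y
    have : (innerSL ℂ (V j y)).comp (V i).toContinuousLinearMap = 0 := by
      refine ContinuousLinearMap.ext_on hdense ?_
      rintro _ ⟨l, rfl⟩
      exact inner_eq_zero_symm.1 (h1 l y)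
    exact inner_eq_zero_symm.1 (congrArg (fun f => f x) this)
  · rw [← d.dense_span]
    refine Submodule.topologicalClosure_mono ?_
    rw [Submodule.span_le]
    rintro _ ⟨⟨j, k⟩, rfl⟩
    refine Submodule.mem_iSup_of_mem j ⟨b k, hV j k⟩

section mono
variable [CompleteSpace H] {J : Type*} {V : J → (H →ₗᵢ[ℂ] H)}

theorem BG_mono (hV : IsHilbertSum ℂ (fun _ : J => H) V) (σ : Equiv.Perm J)
    (T : J → (H ≃ₗᵢ[ℂ] H)) : ∃ g : H ≃ₗᵢ[ℂ] H, ∀ j x, g (V j x) = V (σ j) (T j x) := by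
  classical
  let V' : J → (H →ₗᵢ[ℂ] H) := fun j => (V (σ j)).comp (T j).toLinearIsometry
  have hV' : IsHilbertSum ℂ (fun _ : J => H) V' := by
    refine IsHilbertSum.mk ?_ ?_
    · intro i j hij x y
      exact hV.OrthogonalFamily (σ.injective.ne hij) (T i x) (T j y)
    · have h := hV.OrthogonalFamily.range_linearIsometry
      have h2 : LinearMap.range hV.OrthogonalFamily.linearIsometry.toLinearMap = ⊤ :=
        LinearMap.range_eq_top.2 hV.surjective_isometry
      rw [← h2, h]
      refine Submodule.topologicalClosure_mono (iSup_le fun i => ?_)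
      refine le_trans ?_ (le_iSup _ (σ.symm i))
      rintro _ ⟨x, rfl⟩
      refine ⟨(T (σ.symm i)).symm x, ?_⟩
      simp [V']
  refine ⟨hV.linearIsometryEquiv.trans hV'.linearIsometryEquiv.symm, fun j x => ?_⟩
  have : hV.linearIsometryEquiv (V j x) = lp.single 2 j x := by
    rw [← hV.linearIsometryEquiv_symm_apply_single, LinearIsometryEquiv.apply_symm_apply]
  rw [LinearIsometryEquiv.trans_apply, this, hV'.linearIsometryEquiv_symm_apply_single]
  rfl

theorem BG_ext (hV : IsHilbertSum ℂ (fun _ : J => H) V) (g h : H ≃ₗᵢ[ℂ] H)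
    (hgh : ∀ j x, g (V j x) = h (V j x)) : g = h := by
  ext y
  have h1 := hV.hasSum_linearIsometryEquiv_symm (hV.linearIsometryEquiv y)
  rw [LinearIsometryEquiv.symm_apply_apply] at h1
  have h2 := h1.mapL (g : H →L[ℂ] H)
  have h3 := h1.mapL (h : H →L[ℂ] H)
  refine h2.unique ?_
  convert! h3 using 2 with j
  exact hgh j _

theorem BG_mem_range (hV : IsHilbertSum ℂ (fun _ : J => H) V) (i : J) (y : H)
    (hy : ∀ j, j ≠ i → ∀ x, inner ℂ (V j x) y = 0) : ∃ x, V i x = y := by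
  classical
  refine ⟨hV.linearIsometryEquiv y i, ?_⟩
  rw [← hV.linearIsometryEquiv_symm_apply_single, LinearIsometryEquiv.symm_apply_eq]
  ext j
  by_cases h : j = i
  · subst h; simp
  · rw [lp.single_apply_ne _ _ _ h]
    symm
    have h2 := hy j h (hV.linearIsometryEquiv y j)
    rw [← hV.linearIsometryEquiv.inner_map_map, ← hV.linearIsometryEquiv_symm_apply_single,
      LinearIsometryEquiv.apply_symm_apply, lp.inner_single_left] at h2
    simpa using h2

/-- an operator fixing everything off slot `i` is a single-slot operator -/
theorem BG_restrict (hV : IsHilbertSum ℂ (fun _ : J => H) V) (i : J) (g : H ≃ₗᵢ[ℂ] H)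
    (hg : ∀ j, j ≠ i → ∀ x, g (V j x) = V j x) :
    ∃ v : H ≃ₗᵢ[ℂ] H, ∀ x, g (V i x) = V i (v x) := by
  have key : ∀ g : H ≃ₗᵢ[ℂ] H, (∀ j, j ≠ i → ∀ x, g (V j x) = V j x) →
      ∀ x, ∃ y, V i y = g (V i x) := by
    intro g hg x
    refine BG_mem_range hV i _ (fun j hj z => ?_)
    rw [← hg j hj z, g.inner_map_map]
    exact hV.OrthogonalFamily hj z x
  choose v hv using key g hg
  have hs : ∀ j, j ≠ i → ∀ x, g.symm (V j x) = V j x := fun j hj x => by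
    rw [LinearIsometryEquiv.symm_apply_eq, hg j hj]
  choose w hw using key g.symm hs
  let vl : H →ₗᵢ[ℂ] H :=
    { toFun := v
      map_add' := fun x y => (V i).injective (by simp [hv])
      map_smul' := fun c x => (V i).injective (by simp [hv])
      norm_map' := fun x => by
        change ‖v x‖ = ‖x‖
        rw [← (V i).norm_map (v x), hv, g.norm_map, (V i).norm_map] }
  refine ⟨LinearIsometryEquiv.ofSurjective vl (fun y => ⟨w y, (V i).injective ?_⟩), fun x => ?_⟩
  · change V i (v (w y)) = V i y
    rw [hv, hw, LinearIsometryEquiv.apply_symm_apply]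
  · exact (hv x).symm

end mono

theorem BG_single [CompleteSpace H] (V : ℕ × ℤ → (H →ₗᵢ[ℂ] H))
    (hV : IsHilbertSum ℂ (fun _ : ℕ × ℤ => H) V)
    (W : ℕ → Set (H ≃ₗᵢ[ℂ] H)) (hinv : ∀ n g, g ∈ W n → g⁻¹ ∈ W n)
    (hmul : ∀ m n g h, g ∈ W m → h ∈ W n → g * h ∈ W (m + n))
    (hcov : ∀ g, ∃ n, g ∈ W n) :
    ∃ (i : ℕ × ℤ) (M : ℕ), ∀ g : H ≃ₗᵢ[ℂ] H, (∀ j, j ≠ i → ∀ x, g (V j x) = V j x) → g ∈ W M := by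
  classical
  choose D hD using fun v : ℕ → (H ≃ₗᵢ[ℂ] H) =>
    BG_mono hV 1 (fun j => if 0 ≤ j.2 then v j.1 else 1)
  have hP : ∃ n, ∀ v : H ≃ₗᵢ[ℂ] H, ∃ v' : ℕ → (H ≃ₗᵢ[ℂ] H), v' n = v ∧ D v' ∈ W n := by
    by_contra hcon
    push Not at hcon
    choose v hv using hcon
    obtain ⟨m, hm⟩ := hcov (D v)
    exact hv m v rfl hm
  obtain ⟨n, hn⟩ := hP
  let σ : Equiv.Perm (ℕ × ℤ) :=
    { toFun := fun j => if j.1 = n then (j.1, j.2 + 1) else j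
      invFun := fun j => if j.1 = n then (j.1, j.2 - 1) else j
      left_inv := fun j => by by_cases h : j.1 = n <;> simp [h, Prod.ext_iff]
      right_inv := fun j => by by_cases h : j.1 = n <;> simp [h, Prod.ext_iff] }
  obtain ⟨S, hS⟩ := BG_mono hV σ (fun _ => 1)
  obtain ⟨m, hm⟩ := hcov S
  refine ⟨(n, 0), n + m + n + m, fun g hg => ?_⟩
  obtain ⟨v, hv⟩ := BG_restrict hV (n, 0) g hg
  obtain ⟨v', hv', hW⟩ := hn v
  have hcomm : D v' * S = g * S * D v' := by
    refine BG_ext hV _ _ ?_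
    rintro ⟨p, k⟩ x
    change D v' (S (V (p, k) x)) = g (S (D v' (V (p, k) x)))
    rw [hS, hD, hD, hS]
    change V (σ (p, k)) ((if 0 ≤ (σ (p, k)).2 then v' (σ (p, k)).1 else 1) x) =
      g (V (σ (p, k)) ((if 0 ≤ k then v' p else 1) x))
    by_cases hp : p = n
    · subst hp
      have hσ : σ (p, k) = (p, k + 1) := by simp [σ]
      rw [hσ]
      by_cases hk : k + 1 = 0
      · have h1 : ¬ (0 ≤ k) := by omega
        rw [hk, if_neg h1, if_pos (le_refl _), hv, hv']
        rfl
      · rw [hg _ (by simpa using hk)]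
        have h1 : 0 ≤ k + 1 ↔ 0 ≤ k := by omega
        simp only [h1]
    · have hσ : σ (p, k) = (p, k) := by simp [σ, hp]
      rw [hσ, hg _ (by simp [hp])]
  have : g = D v' * S * (D v')⁻¹ * S⁻¹ := by rw [hcomm]; group
  rw [this]
  exact hmul _ _ _ _ (hmul _ _ _ _ (hmul _ _ _ _ hW hm) (hinv _ _ hW)) (hinv _ _ hm)

theorem BG_main [CompleteSpace H] [TopologicalSpace.SeparableSpace H]
    (hH : ¬ FiniteDimensional ℂ H)
    (W : ℕ → Set (H ≃ₗᵢ[ℂ] H)) (hinv : ∀ n g, g ∈ W n → g⁻¹ ∈ W n)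
    (hmul : ∀ m n g h, g ∈ W m → h ∈ W n → g * h ∈ W (m + n))
    (hcov : ∀ g, ∃ n, g ∈ W n) : ∃ n, ∀ g, g ∈ W n := by
  classical
  obtain ⟨V, hV⟩ := BG_V hH
  obtain ⟨i, M, hM⟩ := BG_single V hV W hinv hmul hcov
  obtain ⟨b⟩ := BG_basis hH ℕ
  have hdense : Dense (Submodule.span ℂ (Set.range b) : Set H) :=
    (Submodule.dense_iff_topologicalClosure_eq_top).2 b.dense_span
  have hinf : Infinite {j : ℕ × ℤ // j ≠ i} := by
    have : ({i}ᶜ : Set (ℕ × ℤ)).Infinite := (Set.finite_singleton i).infinite_compl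
    exact this.to_subtype
  obtain ⟨τ⟩ := nonempty_equiv_of_countable (α := ℕ) (β := {j : ℕ × ℤ // j ≠ i} × ℕ)
  have hVo : Orthonormal ℂ (fun p : (ℕ × ℤ) × ℕ => V p.1 (b p.2)) := by
    refine ⟨fun p => by rw [(V _).norm_map]; exact b.orthonormal.1 _, ?_⟩
    rintro ⟨j, k⟩ ⟨j', k'⟩ h
    by_cases hj : j = j'
    · subst hj
      change inner ℂ (V j (b k)) (V j (b k')) = 0
      rw [(V j).inner_map_map]
      exact b.orthonormal.2 (fun hk => h (by rw [hk]))
    · exact hV.OrthogonalFamily hj _ _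
  let e : ℕ → H := fun n => V (τ n).1.1 (b (τ n).2)
  have he : Orthonormal ℂ e := by
    refine hVo.comp (fun n => ((τ n).1.1, (τ n).2)) ?_
    intro m n h
    simp only [Prod.mk.injEq] at h
    exact τ.injective (Prod.ext (Subtype.ext h.1) h.2)
  have hx : Orthonormal ℂ (fun n => V i (b n)) :=
    hVo.comp (fun n : ℕ => (i, n)) (fun m n h => by simpa using h)
  have hex : ∀ m n, inner ℂ (e m) (V i (b n)) = 0 := fun m n =>
    hV.OrthogonalFamily (τ m).1.2 _ _
  have hFix : ∀ g : H ≃ₗᵢ[ℂ] H, (∀ n, g (e n) = e n) → g ∈ W M := by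
    intro g hg
    refine hM g (fun j hj x => ?_)
    have : (g : H →L[ℂ] H).comp (V j).toContinuousLinearMap = (V j).toContinuousLinearMap := by
      refine ContinuousLinearMap.ext_on hdense ?_
      rintro _ ⟨k, rfl⟩
      have h := hg (τ.symm (⟨j, hj⟩, k))
      simp only [e, Equiv.apply_symm_apply] at h
      exact h
    exact congrArg (fun f => f x) this
  have htrans : ∀ f y : ℕ → H, Orthonormal ℂ f → Orthonormal ℂ y →
      (∀ m n, inner ℂ (f m) (y n) = 0) →
      ∃ M, ∀ g : H ≃ₗᵢ[ℂ] H, (∀ n, g (f n) = f n) → g ∈ W M := by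
    intro f y hf hy hfy
    obtain ⟨h, hh⟩ := BG_extend f e hf he y _ hy hx hfy hex
    obtain ⟨m, hm⟩ := hcov h
    refine ⟨m + M + m, fun g hg => ?_⟩
    have h1 : h * g * h⁻¹ ∈ W M := by
      refine hFix _ (fun n => ?_)
      have e2 : h⁻¹ (e n) = f n := by rw [← hh]; exact h.symm_apply_apply _
      change h (g (h⁻¹ (e n))) = e n
      rw [e2, hg, hh]
    have h2 : g = h⁻¹ * (h * g * h⁻¹) * h := by group
    rw [h2]
    exact hmul _ _ _ _ (hmul _ _ _ _ (hinv _ _ hm) h1) hm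
  obtain ⟨d⟩ := BG_basis hH (Fin 3 × ℕ)
  have hd := d.orthonormal
  have hdo : ∀ t : Fin 3, Orthonormal ℂ (fun n : ℕ => d (t, n)) := fun t =>
    hd.comp (fun n : ℕ => (t, n)) (fun m n h => by simpa using h)
  have hdd : ∀ s t : Fin 3, s ≠ t → ∀ m n : ℕ, inner ℂ (d (s, m)) (d (t, n)) = 0 :=
    fun s t hst m n => hd.2 (fun h => hst (by simpa using congrArg Prod.fst h))
  obtain ⟨A, hA⟩ := htrans _ _ (hdo 0) (hdo 1) (hdd 0 1 (by decide))
  obtain ⟨C, hC⟩ := htrans _ _ (hdo 2) (hdo 1) (hdd 2 1 (by decide))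
  refine ⟨A + C + A + (C + A + C), fun u => ?_⟩
  obtain ⟨h, k, g₁, g₂, h1, h2, h3, h4, rfl⟩ := BG_factor _ _ _ (hdo 0) (hdo 1) (hdo 2)
    (hdd 0 1 (by decide)) (hdd 0 2 (by decide)) (hdd 2 1 (by decide)) u
  exact hmul _ _ _ _
    (hmul _ _ _ _ (hmul _ _ _ _ (hinv _ _ (hA h h1)) (hC g₁ h3)) (hA h h1))
    (hmul _ _ _ _ (hmul _ _ _ _ (hinv _ _ (hC k h2)) (hA g₂ h4)) (hC k h2))

end BoundedGen

theorem exists_bounded_generation_over_sot_closed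
    (H : Type*) [NormedAddCommGroup H] [InnerProductSpace ℂ H] [CompleteSpace H]
    [TopologicalSpace.SeparableSpace H] (hH : ¬ FiniteDimensional ℂ H)
    (F : Set (unitary (H →L[ℂ] H)))
    (hFsymm : F⁻¹ = F)
    -- `F` is closed in the strong operator topology: it contains every unitary that can
    -- be approximated by members of `F` uniformly on finitely many vectors.
    (hFclosed : ∀ T : unitary (H →L[ℂ] H),
      (∀ (s : Finset H) (ε : ℝ), 0 < ε →
        ∃ S ∈ F, ∀ x ∈ s, ‖(S : H →L[ℂ] H) x - (T : H →L[ℂ] H) x‖ < ε) → T ∈ F)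
    (U : ℕ → unitary (H →L[ℂ] H))
    (hgen : Subgroup.closure (F ∪ Set.range U) = ⊤) :
    ∃ n : ℕ,
      (F ∪ {1} ∪ ⋃ i ∈ Finset.range (n + 1), {U i, (U i)⁻¹}) ^ n = Set.univ := by
  set E : ℕ → Set (unitary (H →L[ℂ] H)) := fun n =>
    F ∪ {1} ∪ ⋃ i ∈ Finset.range (n + 1), {U i, (U i)⁻¹} with hE
  have hone : ∀ n, (1 : unitary (H →L[ℂ] H)) ∈ E n := fun n => Or.inl (Or.inr rfl)
  have hmonoE : ∀ m n, m ≤ n → E m ⊆ E n := by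
    intro m n hmn
    refine Set.union_subset_union_right _ ?_
    refine Set.biUnion_subset_biUnion_left ?_
    intro i hi
    have hi' := Finset.mem_range.1 hi
    exact Finset.mem_range.2 (by omega)
  have hmono : ∀ m n, m ≤ n → E m ^ m ⊆ E n ^ n := fun m n hmn =>
    (Set.pow_subset_pow_left (hmonoE m n hmn)).trans (Set.pow_subset_pow_right (hone n) hmn)
  have hmul : ∀ m n g h, g ∈ E m ^ m → h ∈ E n ^ n → g * h ∈ E (m + n) ^ (m + n) := by
    intro m n g h hg hh
    rw [pow_add]
    exact Set.mul_mem_mul (Set.pow_subset_pow_left (hmonoE m _ (by omega)) hg)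
      (Set.pow_subset_pow_left (hmonoE n _ (by omega)) hh)
  have hEinv : ∀ n, (E n)⁻¹ = E n := by
    intro n
    simp only [hE, Set.union_inv, hFsymm, Set.iUnion_inv, Set.inv_singleton, inv_one,
      Set.inv_insert, inv_inv]
    congr 1
    refine Set.iUnion_congr fun i => Set.iUnion_congr fun _ => ?_
    exact Set.pair_comm _ _
  have hinv : ∀ n g, g ∈ E n ^ n → g⁻¹ ∈ E n ^ n := by
    intro n g hg
    rw [← Set.mem_inv, ← inv_pow, hEinv]
    exact hg
  have hcov : ∀ g, ∃ n, g ∈ E n ^ n := by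
    intro g
    have hg : g ∈ Subgroup.closure (F ∪ Set.range U) := by rw [hgen]; trivial
    induction hg using Subgroup.closure_induction with
    | mem x hx =>
      rcases hx with hx | ⟨i, rfl⟩
      · exact ⟨1, by rw [pow_one]; exact Or.inl (Or.inl hx)⟩
      · refine ⟨i + 1, Set.pow_subset_pow_right (hone _) (Nat.le_add_left 1 i) ?_⟩
        rw [pow_one]
        refine Or.inr (Set.mem_biUnion (x := i) ?_ (Or.inl rfl))
        simp
    | one => exact ⟨0, by simp⟩
    | mul x y _ _ hx hy =>
      obtain ⟨m, hm⟩ := hx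
      obtain ⟨n, hn⟩ := hy
      exact ⟨m + n, hmul _ _ _ _ hm hn⟩
    | inv x _ hx =>
      obtain ⟨m, hm⟩ := hx
      exact ⟨m, hinv _ _ hm⟩
  let Θ : unitary (H →L[ℂ] H) ≃* (H ≃ₗᵢ[ℂ] H) := Unitary.linearIsometryEquiv
  obtain ⟨n, hn⟩ := BG_main hH (fun n => {g | Θ.symm g ∈ E n ^ n})
    (fun n g hg => by
      change Θ.symm g⁻¹ ∈ E n ^ n
      rw [map_inv]
      exact hinv _ _ hg)
    (fun m n g h hg hh => by
      change Θ.symm (g * h) ∈ E (m + n) ^ (m + n)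
      rw [map_mul]
      exact hmul _ _ _ _ hg hh)
    (fun g => hcov _)
  refine ⟨n, Set.eq_univ_of_forall fun g => ?_⟩
  have h : Θ.symm (Θ g) ∈ E n ^ n := hn (Θ g)
  rw [MulEquiv.symm_apply_apply] at h
  exact h
end

section
/- The unitary group U(ℓ₂) of separable infinite-dimensional complex Hilbert space, regarded as a discrete group, is Cayley bounded and has uncountable cofinality; equivalently, every action of U(ℓ₂) by isometries on a metric space has all orbits bounded. -/
open Pointwise

/-- `G` has uncountable cofinality: it is not the union of a countable strictly
increasing chain of proper subgroups. -/
def UncountableCofinality (G : Type*) [Group G] : Prop :=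
  ¬ ∃ H : ℕ → Subgroup G, (∀ n, H n < H (n + 1)) ∧ (∀ n, H n ≠ ⊤) ∧
      (⋃ n, (H n : Set G)) = Set.univ

/-- `G` is Cayley bounded: every symmetric generating set containing the identity
generates by words of some fixed finite length. -/
def CayleyBounded (G : Type*) [Group G] : Prop :=
  ∀ E : Set G, (1 : G) ∈ E → E⁻¹ = E → Subgroup.closure E = ⊤ →
    ∃ n : ℕ, E ^ n = Set.univ

namespace UB

open Submodule

set_option linter.unusedSectionVars false

/-- Bergman-type property. -/
def Berg (G : Type*) [Group G] : Prop :=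
  ∀ W : ℕ → Set G, Monotone W → (∀ n, ∀ g ∈ W n, g⁻¹ ∈ W n) →
    (∀ n, ∀ g ∈ W n, ∀ h ∈ W n, g * h ∈ W (n + 1)) → (∀ g, ∃ n, g ∈ W n) →
    ∃ n, ∀ g, g ∈ W n

theorem Berg.transfer {G G' : Type*} [Group G] [Group G'] (e : G ≃* G') (h : Berg G') :
    Berg G := by
  intro W hm hi hmul hu
  obtain ⟨n, hn⟩ := h (fun n => {g | e.symm g ∈ W n}) (fun a b hab g hg => hm hab hg)
    (fun n g hg => by simpa using hi n _ hg)
    (fun n g hg k hk => by simpa using hmul n _ hg _ hk) (fun g => hu _)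
  exact ⟨n, fun g => by simpa using hn (e g)⟩

section basis
variable {K : Type*} [NormedAddCommGroup K] [InnerProductSpace ℂ K]

theorem orthonormal_countable [TopologicalSpace.SeparableSpace K] {ι : Type*} {v : ι → K}
    (hv : Orthonormal ℂ v) : Countable ι := by
  refine Pairwise.countable_of_isOpen_disjoint (s := fun i => Metric.ball (v i) (1/2)) ?_
    (fun i => Metric.isOpen_ball) (fun i => ⟨v i, by simp⟩)
  intro i j hij
  apply Metric.ball_disjoint_ball
  have h : ‖v i - v j‖ ^ 2 = 2 := by
    rw [@norm_sub_sq ℂ, hv.1 i, hv.1 j, hv.2 hij]; norm_num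
  rw [dist_eq_norm]
  nlinarith [norm_nonneg (v i - v j)]

variable [CompleteSpace K]

/-- reindexing a Hilbert basis -/
theorem hb_reindex {ι κ : Type*} (b : HilbertBasis ι ℂ K) (e : κ ≃ ι) :
    ∃ b' : HilbertBasis κ ℂ K, ∀ k, b' k = b (e k) := by
  have ho : Orthonormal ℂ (b ∘ e) := b.orthonormal.comp e e.injective
  refine ⟨HilbertBasis.mk ho ?_, fun k => by simp⟩
  rw [Set.range_comp, e.range_eq_univ, Set.image_univ, b.dense_span]

theorem hb_nat [TopologicalSpace.SeparableSpace K] (hK : ¬ FiniteDimensional ℂ K) :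
    Nonempty (HilbertBasis ℕ ℂ K) := by
  obtain ⟨w, b, hb⟩ := exists_hilbertBasis ℂ K
  have hc : Countable w := orthonormal_countable b.orthonormal
  have hi : Infinite w := by
    by_contra hfin
    rw [not_infinite_iff_finite] at hfin
    have := Fintype.ofFinite w
    exact hK (b.toOrthonormalBasis.toBasis.finiteDimensional_of_finite)
  obtain ⟨e⟩ := nonempty_equiv_of_countable (α := ℕ) (β := w)
  exact ⟨(hb_reindex b e).choose⟩

theorem hb_extend [TopologicalSpace.SeparableSpace K] {ι : Type*} {s : ι → K} {d : ℕ → K}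
    (hs : Orthonormal ℂ s) (hd : Orthonormal ℂ d) (hsd : ∀ i j, inner ℂ (s i) (d j) = 0) :
    ∃ b : HilbertBasis (ι ⊕ ℕ) ℂ K, ∀ i, b (Sum.inl i) = s i := by
  set L := (span ℂ (Set.range s))ᗮ with hL
  have hdL : ∀ j, d j ∈ L := by
    intro j
    rw [hL, mem_orthogonal]
    intro u hu
    induction hu using Submodule.span_induction with
    | mem x h => obtain ⟨i, rfl⟩ := h; exact hsd i j
    | zero => simp
    | add x y _ _ h1 h2 => simp [inner_add_left, h1, h2]
    | smul a x _ h => simp [inner_smul_left, h]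
  have hinf : ¬ FiniteDimensional ℂ L := by
    intro hf
    have hli : LinearIndependent ℂ (fun j => (⟨d j, hdL j⟩ : L)) := by
      apply LinearIndependent.of_comp L.subtype
      exact hd.linearIndependent
    have := hli.finite
    exact not_finite ℕ
  obtain ⟨c⟩ := hb_nat (K := L) hinf
  have hsL : ∀ i (x : L), inner ℂ (s i) (x : K) = 0 := fun i x =>
    (mem_orthogonal _ _).1 x.2 _ (subset_span ⟨i, rfl⟩)
  have ho : Orthonormal ℂ (Sum.elim s (fun n => (c n : K))) := by
    constructor
    · rintro (i | n)
      · exact hs.1 i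
      · exact c.orthonormal.1 n
    · rintro (i | n) (j | m) hij
      · exact hs.2 (by simpa using hij)
      · exact hsL i _
      · have := hsL j (c n)
        rw [← inner_conj_symm] 
        simp [this]
      · exact c.orthonormal.2 (by simpa using hij)
  suffices hbot : (span ℂ (Set.range (Sum.elim s (fun n => (c n : K)))))ᗮ = ⊥ from
    ⟨HilbertBasis.mkOfOrthogonalEqBot ho hbot, fun i => by
      rw [HilbertBasis.coe_mkOfOrthogonalEqBot]; rfl⟩
  rw [eq_bot_iff]
  intro x hx
  rw [mem_orthogonal] at hx
  have hxL : x ∈ L := by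
    rw [hL, mem_orthogonal]
    intro u hu
    exact hx u (span_mono (by rintro _ ⟨i, rfl⟩; exact ⟨Sum.inl i, rfl⟩) hu)
  have h0 : c.repr ⟨x, hxL⟩ = 0 := by
    ext n
    rw [c.repr_apply_apply]
    exact hx _ (subset_span ⟨Sum.inr n, rfl⟩)
  have : (⟨x, hxL⟩ : L) = 0 := by simpa using h0
  simpa using congrArg Subtype.val this

theorem exists_map [TopologicalSpace.SeparableSpace K] {ι : Type*} {s r : ι → K} {d d' : ℕ → K}
    (hs : Orthonormal ℂ s) (hd : Orthonormal ℂ d) (hsd : ∀ i j, inner ℂ (s i) (d j) = 0)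
    (hr : Orthonormal ℂ r) (hd' : Orthonormal ℂ d') (hrd : ∀ i j, inner ℂ (r i) (d' j) = 0) :
    ∃ t : K ≃ₗᵢ[ℂ] K, ∀ i, t (s i) = r i := by
  classical
  obtain ⟨b, hb⟩ := hb_extend hs hd hsd
  obtain ⟨b', hb'⟩ := hb_extend hr hd' hrd
  refine ⟨b.repr.trans b'.repr.symm, fun i => ?_⟩
  rw [← hb, ← hb', LinearIsometryEquiv.trans_apply, b.repr_self, b'.repr_symm_single]

theorem hb_ext {ι : Type*} (b : HilbertBasis ι ℂ K) (f g : K ≃ₗᵢ[ℂ] K)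
    (h : ∀ i, f (b i) = g (b i)) : f = g := by
  have : (f.toContinuousLinearEquiv : K →L[ℂ] K) = g.toContinuousLinearEquiv := by
    apply ContinuousLinearMap.ext_on (s := Set.range b)
    · have := b.dense_span
      rw [dense_iff_closure_eq, ← Submodule.topologicalClosure_coe, this]; rfl
    · rintro _ ⟨i, rfl⟩; exact h i
  ext x
  exact congrArg (fun F : K →L[ℂ] K => F x) this

/-- unit vector in infinite-dim subspace orthogonal to a finite set -/
theorem exists_unit (P : Submodule ℂ K) (hP : ¬ FiniteDimensional ℂ P) (F : Finset K) :
    ∃ u ∈ P, ‖u‖ = 1 ∧ ∀ f ∈ F, inner ℂ f u = 0 := by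
  have hF : FiniteDimensional ℂ (span ℂ (F : Set K)) := inferInstance
  have : ∃ x ∈ P, x ≠ 0 ∧ ∀ f ∈ F, inner ℂ f x = 0 := by
    by_contra! hcon
    apply hP
    let φ : P →ₗ[ℂ] (F → ℂ) := LinearMap.pi (fun f => (innerSL ℂ (f : K)).toLinearMap ∘ₗ P.subtype)
    refine FiniteDimensional.of_injective φ ?_
    rw [injective_iff_map_eq_zero]
    intro x hx
    by_contra hne
    obtain ⟨f, hf, hne'⟩ := hcon x x.2 (by simpa using hne)
    exact hne' (congrFun hx ⟨f, hf⟩)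
  obtain ⟨x, hxP, hx0, hx⟩ := this
  refine ⟨((‖x‖⁻¹ : ℝ) : ℂ) • x, P.smul_mem _ hxP, ?_, fun f hf => by simp [hx f hf]⟩
  rw [norm_smul]; simp [hx0]

theorem exists_unit_dir (P : Submodule ℂ K) (hP : ¬ FiniteDimensional ℂ P) (F : Finset K)
    (x : K) (hx : x ∈ P) (hxF : ∀ f ∈ F, inner ℂ f x = 0) :
    ∃ u ∈ P, ‖u‖ = 1 ∧ (∀ f ∈ F, inner ℂ f u = 0) ∧ ∃ a : ℂ, x = a • u := by
  by_cases h : x = 0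
  · obtain ⟨u, h1, h2, h3⟩ := exists_unit P hP F
    exact ⟨u, h1, h2, h3, 0, by simp [h]⟩
  · refine ⟨((‖x‖⁻¹ : ℝ) : ℂ) • x, P.smul_mem _ hx, ?_,
      fun f hf => by simp [hxF f hf], (‖x‖ : ℂ), ?_⟩
    · rw [norm_smul]; simp [h]
    · rw [smul_smul]; simp [h]

/-- The main sequence construction. -/
theorem exists_seq (P : Submodule ℂ K) [P.HasOrthogonalProjection]
    (hP : ¬ FiniteDimensional ℂ P) (hQ : ¬ FiniteDimensional ℂ Pᗮ) (g : K ≃ₗᵢ[ℂ] K) :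
    ∃ e u v : ℕ → K, Orthonormal ℂ e ∧ Orthonormal ℂ u ∧ Orthonormal ℂ v ∧
      (∀ n, e n ∈ P) ∧ (∀ n, u n ∈ P) ∧ (∀ n, v n ∈ Pᗮ) ∧
      ∀ n, ∃ a c : ℂ, g (e n) = a • u n + c • v n := by
  classical
  obtain ⟨f, hf1, hf2⟩ := exists_seq_of_forall_finset_exists
    (fun t : K × K × K => t.1 ∈ P ∧ t.2.1 ∈ P ∧ t.2.2 ∈ Pᗮ ∧ ‖t.1‖ = 1 ∧ ‖t.2.1‖ = 1 ∧
      ‖t.2.2‖ = 1 ∧ ∃ a c : ℂ, g t.1 = a • t.2.1 + c • t.2.2)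
    (fun t t' => inner ℂ t.1 t'.1 = 0 ∧ inner ℂ t.2.1 t'.2.1 = 0 ∧ inner ℂ t.2.2 t'.2.2 = 0) (by
      intro S hS
      obtain ⟨e, heP, he1, heo⟩ := exists_unit P hP
        (S.image (fun t => t.1) ∪ S.image (fun t => g.symm t.2.1) ∪ S.image (fun t => g.symm t.2.2))
      have hsum : P.starProjection (g e) + Pᗮ.starProjection (g e) = g e := 
        Submodule.starProjection_add_starProjection_orthogonal _
      have hpP : P.starProjection (g e) ∈ P := Submodule.starProjection_apply_mem _ _
      have hpQ : Pᗮ.starProjection (g e) ∈ Pᗮ := Submodule.starProjection_apply_mem _ _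
      obtain ⟨u, hu, hu1, huo, a, ha⟩ := exists_unit_dir P hP (S.image (fun t => t.2.1)) _ hpP (by
        intro f hf
        obtain ⟨t, ht, rfl⟩ := Finset.mem_image.1 hf
        have h1 : inner ℂ (g.symm t.2.1) e = 0 := heo _ (by
          simp only [Finset.mem_union, Finset.mem_image]; exact Or.inl (Or.inr ⟨t, ht, rfl⟩))
        have h2 : inner ℂ t.2.1 (g e) = 0 := by
          rw [← h1, ← g.inner_map_map (g.symm _), g.apply_symm_apply]
        have h3 : inner ℂ t.2.1 (Pᗮ.starProjection (g e)) = 0 :=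
          (mem_orthogonal _ _).1 hpQ _ (hS t ht).2.1
        rw [← hsum, inner_add_right, h3, add_zero] at h2
        exact h2)
      obtain ⟨v, hv, hv1, hvo, c, hc⟩ := exists_unit_dir Pᗮ hQ (S.image (fun t => t.2.2)) _ hpQ (by
        intro f hf
        obtain ⟨t, ht, rfl⟩ := Finset.mem_image.1 hf
        have h1 : inner ℂ (g.symm t.2.2) e = 0 := heo _ (by
          simp only [Finset.mem_union, Finset.mem_image]; exact (Or.inr ⟨t, ht, rfl⟩))
        have h2 : inner ℂ t.2.2 (g e) = 0 := by
          rw [← h1, ← g.inner_map_map (g.symm _), g.apply_symm_apply]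
        have h3 : inner ℂ t.2.2 (P.starProjection (g e)) = 0 :=
          (mem_orthogonal' _ _).1 (hS t ht).2.2.1 _ hpP
        rw [← hsum, inner_add_right, h3, zero_add] at h2
        exact h2)
      refine ⟨(e, u, v), ⟨heP, hu, hv, he1, hu1, hv1, a, c, ?_⟩, ?_⟩
      · rw [← ha, ← hc]; exact hsum.symm
      · intro t ht
        refine ⟨heo _ ?_, huo _ (Finset.mem_image_of_mem _ ht), hvo _ (Finset.mem_image_of_mem _ ht)⟩
        simp only [Finset.mem_union, Finset.mem_image]
        exact Or.inl (Or.inl ⟨t, ht, rfl⟩))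
  have key : ∀ h : K × K × K → K, (∀ n, ‖h (f n)‖ = 1) →
      (∀ m n, m < n → inner ℂ (h (f m)) (h (f n)) = 0) → Orthonormal ℂ (fun n => h (f n)) := by
    intro h h1 h2
    refine ⟨h1, ?_⟩
    intro m n hmn
    rcases lt_or_gt_of_ne hmn with hlt | hlt
    · exact h2 _ _ hlt
    · change inner ℂ (h (f m)) (h (f n)) = 0
      rw [← inner_conj_symm, h2 _ _ hlt]; simp
  exact ⟨fun n => (f n).1, fun n => (f n).2.1, fun n => (f n).2.2,
    key (fun t => t.1) (fun n => (hf1 n).2.2.2.1) (fun m n h => (hf2 m n h).1),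
    key (fun t => t.2.1) (fun n => (hf1 n).2.2.2.2.1) (fun m n h => (hf2 m n h).2.1),
    key (fun t => t.2.2) (fun n => (hf1 n).2.2.2.2.2.1) (fun m n h => (hf2 m n h).2.2),
    fun n => (hf1 n).1, fun n => (hf1 n).2.1, fun n => (hf1 n).2.2.1,
    fun n => (hf1 n).2.2.2.2.2.2⟩

end basis

section bounded
variable {G : Type*} [Group G]

/-- `S` is contained in one of the `W n`. -/
def Bd (W : ℕ → Set G) (S : Set G) : Prop := ∃ n, ∀ g ∈ S, g ∈ W n

theorem Bd.mono {W : ℕ → Set G} {S T : Set G} (h : Bd W T) (hST : S ⊆ T) : Bd W S := by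
  obtain ⟨n, hn⟩ := h
  exact ⟨n, fun g hg => hn g (hST hg)⟩

theorem Bd.inv {W : ℕ → Set G} (hi : ∀ n, ∀ g ∈ W n, g⁻¹ ∈ W n) {S : Set G} (h : Bd W S) :
    Bd W S⁻¹ := by
  obtain ⟨n, hn⟩ := h
  exact ⟨n, fun g hg => by simpa using hi n _ (hn _ hg)⟩

theorem Bd.mul {W : ℕ → Set G} (hm : Monotone W)
    (hmul : ∀ n, ∀ g ∈ W n, ∀ h ∈ W n, g * h ∈ W (n + 1)) {S T : Set G}
    (h : Bd W S) (h' : Bd W T) : Bd W (S * T) := by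
  obtain ⟨n, hn⟩ := h
  obtain ⟨m, hm'⟩ := h'
  refine ⟨max n m + 1, ?_⟩
  rintro _ ⟨a, ha, b, hb, rfl⟩
  exact hmul _ _ (hm (le_max_left _ _) (hn _ ha)) _ (hm (le_max_right _ _) (hm' _ hb))

theorem Bd.single {W : ℕ → Set G} (hu : ∀ g, ∃ n, g ∈ W n) (g : G) : Bd W {g} := by
  obtain ⟨n, hn⟩ := hu g
  exact ⟨n, fun x hx => by rw [Set.mem_singleton_iff.1 hx]; exact hn⟩

end bounded

section step3
variable {K : Type*} [NormedAddCommGroup K] [InnerProductSpace ℂ K]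

/-- Unitaries fixing every vector of a family. -/
def fixer {ι : Type*} (s : ι → K) : Set (K ≃ₗᵢ[ℂ] K) := {g | ∀ i, g (s i) = s i}

variable [CompleteSpace K]

theorem fixer_closure {ι : Type*} {s : ι → K} {g : K ≃ₗᵢ[ℂ] K} (hg : g ∈ fixer s) {v : K}
    (hv : v ∈ (span ℂ (Set.range s))ᗮᗮ) : g v = v := by
  rw [orthogonal_orthogonal_eq_closure] at hv
  let F : Submodule ℂ K := LinearMap.eqLocus (g.toLinearEquiv : K →ₗ[ℂ] K) LinearMap.id
  have hF : IsClosed (F : Set K) := isClosed_eq g.continuous continuous_id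
  have : (span ℂ (Set.range s)).topologicalClosure ≤ F := by
    apply topologicalClosure_minimal _ _ hF
    rw [span_le]
    rintro _ ⟨i, rfl⟩
    exact hg i
  exact this hv

theorem orthonormal_sum {ι κ : Type*} {s : ι → K} {r : κ → K} (hs : Orthonormal ℂ s)
    (hr : Orthonormal ℂ r) (hsr : ∀ i j, inner ℂ (s i) (r j) = 0) :
    Orthonormal ℂ (Sum.elim s r) := by
  constructor
  · rintro (i | n)
    · exact hs.1 i
    · exact hr.1 n
  · rintro (i | n) (j | m) hij
    · exact hs.2 (by simpa using hij)
    · exact hsr i _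
    · have := hsr j n
      change inner ℂ (r n) (s j) = 0
      rw [← inner_conj_symm, this]
      simp
    · exact hr.2 (by simpa using hij)

variable [TopologicalSpace.SeparableSpace K]

theorem exists_fixer_map {s q r d d' : ℕ → K}
    (hs : Orthonormal ℂ s) (hq : Orthonormal ℂ q) (hr : Orthonormal ℂ r)
    (hd : Orthonormal ℂ d) (hd' : Orthonormal ℂ d')
    (hsq : ∀ i j, inner ℂ (s i) (q j) = 0) (hsr : ∀ i j, inner ℂ (s i) (r j) = 0)
    (hsd : ∀ i j, inner ℂ (s i) (d j) = 0) (hsd' : ∀ i j, inner ℂ (s i) (d' j) = 0)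
    (hqd : ∀ i j, inner ℂ (q i) (d j) = 0) (hrd : ∀ i j, inner ℂ (r i) (d' j) = 0) :
    ∃ t ∈ fixer s, ∀ i, t (q i) = r i := by
  obtain ⟨t, ht⟩ := exists_map (s := Sum.elim s q) (r := Sum.elim s r) (d := d) (d' := d')
    (orthonormal_sum hs hq hsq) hd (by rintro (i | i) j; exacts [hsd i j, hqd i j])
    (orthonormal_sum hs hr hsr) hd' (by rintro (i | i) j; exacts [hsd' i j, hrd i j])
  exact ⟨t, fun i => ht (Sum.inl i), fun i => ht (Sum.inr i)⟩

theorem exists_fixer_even {s q r : ℕ → K}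
    (hs : Orthonormal ℂ s) (hq : Orthonormal ℂ q) (hr : Orthonormal ℂ r)
    (hsq : ∀ i j, inner ℂ (s i) (q j) = 0) (hsr : ∀ i j, inner ℂ (s i) (r j) = 0) :
    ∃ t ∈ fixer s, ∀ i, t (q (2 * i)) = r (2 * i) := by
  have hi : Function.Injective (fun i : ℕ => 2 * i) := fun a b h => by simpa using h
  have hi' : Function.Injective (fun i : ℕ => 2 * i + 1) := fun a b h => by simpa using h
  exact exists_fixer_map (s := s) (q := fun i => q (2 * i)) (r := fun i => r (2 * i))
    (d := fun i => q (2 * i + 1)) (d' := fun i => r (2 * i + 1)) hs (hq.comp _ hi) (hr.comp _ hi)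
    (hq.comp _ hi') (hr.comp _ hi') (fun i j => hsq _ _) (fun i j => hsr _ _)
    (fun i j => hsq _ _) (fun i j => hsr _ _) (fun i j => hq.2 (by omega))
    (fun i j => hr.2 (by omega))

theorem step3 (hK : ¬ FiniteDimensional ℂ K) (W : ℕ → Set (K ≃ₗᵢ[ℂ] K)) (hm : Monotone W)
    (hi : ∀ n, ∀ g ∈ W n, g⁻¹ ∈ W n)
    (hmul : ∀ n, ∀ g ∈ W n, ∀ h ∈ W n, g * h ∈ W (n + 1)) (hu : ∀ g, ∃ n, g ∈ W n)
    {ι : Type*} (eι : ℕ ≃ ι) (s : ι → K) (d : ℕ → K)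
    (hs : Orthonormal ℂ s) (hd : Orthonormal ℂ d) (hsd : ∀ i j, inner ℂ (s i) (d j) = 0)
    (hbd : Bd W (fixer s)) : ∃ n, ∀ g, g ∈ W n := by
  have hall : ∀ r d' : ℕ → K, Orthonormal ℂ r → Orthonormal ℂ d' →
      (∀ i j, inner ℂ (r i) (d' j) = 0) → Bd W (fixer r) := by
    intro r d' hr hd' hrd
    obtain ⟨t, ht⟩ := exists_map (s := s ∘ eι) (r := r) (hs.comp _ eι.injective) hd
      (fun i j => hsd _ _) hr hd' hrd
    refine (((Bd.single hu t).mul hm hmul hbd).mul hm hmul (Bd.single hu t⁻¹)).mono ?_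
    intro g hg
    refine ⟨t * (t⁻¹ * g * t), ⟨t, rfl, _, ?_, rfl⟩, t⁻¹, rfl, by group⟩
    intro i
    obtain ⟨k, rfl⟩ := eι.surjective i
    change t.symm (g (t ((s ∘ eι) k))) = _
    rw [ht, hg k, ← ht, t.symm_apply_apply]
    rfl
  obtain ⟨b0⟩ := hb_nat hK
  obtain ⟨b, -⟩ := hb_reindex b0 (Equiv.natSumNatEquivNat)
  have hbo := b.orthonormal
  set a : ℕ → K := fun i => b (Sum.inl i) with ha_def
  set c : ℕ → K := fun i => b (Sum.inr i) with hc_def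
  have ha : Orthonormal ℂ a := hbo.comp _ Sum.inl_injective
  have hc : Orthonormal ℂ c := hbo.comp _ Sum.inr_injective
  have hac : ∀ i j, inner ℂ (a i) (c j) = 0 := fun i j => hbo.2 (by simp)
  have hca : ∀ i j, inner ℂ (c i) (a j) = 0 := fun i j => hbo.2 (by simp)
  have hev : Function.Injective (fun i : ℕ => 2 * i) := fun a b h => by simpa using h
  have hod : Function.Injective (fun i : ℕ => 2 * i + 1) := fun a b h => by simpa using h
  have B1 := hall c a hc ha hca
  have B2 := hall a c ha hc hac
  have B3 := hall (fun i => a (2 * i + 1)) c (ha.comp _ hod) hc (fun i j => hac _ _)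
  have B4 := hall (fun i => a (2 * i)) c (ha.comp _ hev) hc (fun i j => hac _ _)
  obtain ⟨n, hn⟩ := ((((B1.inv hi).mul hm hmul (B2.inv hi)).mul hm hmul B3).mul hm hmul B4).mul
    hm hmul (B1.inv hi)
  refine ⟨n, fun g => hn g ?_⟩
  set P : Submodule ℂ K := (span ℂ (Set.range c))ᗮ with hP
  have hcP : ∀ i, c i ∈ Pᗮ := fun i => le_orthogonal_orthogonal _ (subset_span ⟨i, rfl⟩)
  have hPc : ∀ x ∈ P, ∀ i, inner ℂ (c i) x = 0 := fun x hx i => 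
    (mem_orthogonal' _ _).1 (hcP i) x hx
  have haP : ∀ i, a i ∈ P := by
    intro i
    rw [hP, mem_orthogonal]
    intro u hu
    induction hu using Submodule.span_induction with
    | mem x h => obtain ⟨j, rfl⟩ := h; exact hca j i
    | zero => simp
    | add x y _ _ h1 h2 => simp [inner_add_left, h1, h2]
    | smul a x _ h => simp [inner_smul_left, h]
  have fin : ∀ (L : Submodule ℂ K) (x : ℕ → K), Orthonormal ℂ x → (∀ i, x i ∈ L) →
      ¬ FiniteDimensional ℂ L := by
    intro L x hx hxL hf
    have hli : LinearIndependent ℂ (fun j => (⟨x j, hxL j⟩ : L)) := by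
      apply LinearIndependent.of_comp L.subtype
      exact hx.linearIndependent
    have := hli.finite
    exact not_finite ℕ
  obtain ⟨e, u, v, he, hu', hv, heP, huP, hvP, hg⟩ :=
    exists_seq P (fin P a ha haP) (fin Pᗮ c hc hcP) g
  choose α γ hαγ using hg
  obtain ⟨w, hw, hwe⟩ := exists_fixer_even hc ha he hca (fun i j => hPc _ (heP j) i)
  obtain ⟨x, hx, hxe⟩ := exists_fixer_even hc hu' ha (fun i j => hPc _ (huP j) i) hca
  obtain ⟨y, hy, hye⟩ := exists_fixer_even ha hv hc 
    (fun i j => (mem_orthogonal _ _).1 (hvP j) _ (haP i)) hac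
  have hr : ∀ i, (y * x * g * w) (a (2 * i)) = α (2 * i) • a (2 * i) + γ (2 * i) • c (2 * i) := by
    intro i
    change y (x (g (w (a (2 * i))))) = _
    rw [hwe, hαγ, map_add, map_smul, map_smul, hxe, fixer_closure hx (hvP _), map_add, map_smul,
      map_smul, hye, hy]
  have hro : Orthonormal ℂ (fun i => (y * x * g * w) (a (2 * i))) :=
    (ha.comp _ hev).comp_linearIsometryEquiv (y * x * g * w)
  obtain ⟨z, hz, hze⟩ := exists_fixer_map (s := fun i => a (2 * i + 1)) (q := fun i => a (2 * i))
    (r := fun i => (y * x * g * w) (a (2 * i))) (d := fun i => c (2 * i + 1))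
    (d' := fun i => c (2 * i + 1)) (ha.comp _ hod) (ha.comp _ hev) hro (hc.comp _ hod)
    (hc.comp _ hod) (fun i j => ha.2 (by omega))
    (fun i j => by
      rw [hr, inner_add_right, inner_smul_right, inner_smul_right, hac,
        ha.2 (show 2 * i + 1 ≠ 2 * j by omega)]; simp)
    (fun i j => hac _ _) (fun i j => hac _ _) (fun i j => hac _ _)
    (fun i j => by
      rw [hr, inner_add_left, inner_smul_left, inner_smul_left, hac,
        hc.2 (show 2 * i ≠ 2 * j + 1 by omega)]; simp)
  refine ⟨x⁻¹ * y⁻¹ * z * (z⁻¹ * (y * x * g * w)), ⟨x⁻¹ * y⁻¹ * z, ⟨x⁻¹ * y⁻¹, 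
    ⟨x⁻¹, by simpa using hx, y⁻¹, by simpa using hy, rfl⟩, z, hz, rfl⟩, _, ?_, rfl⟩, w⁻¹, 
    by simpa using hw, by group⟩
  intro i
  change z.symm ((y * x * g * w) (a (2 * i))) = a (2 * i)
  rw [← hze i, z.symm_apply_apply]

end step3

section step1
open scoped ENNReal

/-- `ℓ²(ℕ)` -/
abbrev EE : Type := lp (fun _ : ℕ => ℂ) 2

/-- countable Hilbert sum of copies of `ℓ²(ℕ)` -/
abbrev MM : Type := lp (fun _ : ℕ × ℤ => EE) 2

theorem memlp_of_norm {ι κ E : Type*} [NormedAddCommGroup E] (x : lp (fun _ : ι => E) 2)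
    (σ : κ ≃ ι) (y : κ → E) (h : ∀ i, ‖y i‖ = ‖x (σ i)‖) : Memℓp y 2 := by
  have hx := lp.memℓp x
  rw [memℓp_gen_iff (by norm_num)] at hx ⊢
  simp_rw [h]
  exact (σ.summable_iff (f := fun i => ‖x i‖ ^ (2 : ℝ≥0∞).toReal)).2 hx

theorem norm_of_norm {ι κ E : Type*} [NormedAddCommGroup E] (x : lp (fun _ : ι => E) 2)
    (σ : κ ≃ ι) (y : lp (fun _ : κ => E) 2) (h : ∀ i, ‖y i‖ = ‖x (σ i)‖) : ‖y‖ = ‖x‖ := by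
  rw [lp.norm_eq_tsum_rpow (by norm_num), lp.norm_eq_tsum_rpow (by norm_num)]
  simp_rw [h]
  rw [σ.tsum_eq (fun i => ‖x i‖ ^ (2 : ℝ≥0∞).toReal)]

/-- block diagonal unitary -/
noncomputable def blk (f : ℕ × ℤ → (EE ≃ₗᵢ[ℂ] EE)) : MM ≃ₗᵢ[ℂ] MM where
  toFun x := ⟨fun i => f i (x i), memlp_of_norm x (Equiv.refl _) _ fun i => (f i).norm_map _⟩
  invFun x := ⟨fun i => (f i).symm (x i),
    memlp_of_norm x (Equiv.refl _) _ fun i => (f i).symm.norm_map _⟩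
  map_add' x y := by
    apply lp.ext; funext i; exact map_add (f i) (x i) (y i)
  map_smul' c x := by
    apply lp.ext; funext i; exact map_smul (f i) c (x i)
  left_inv x := by
    apply lp.ext; funext i; exact (f i).symm_apply_apply (x i)
  right_inv x := by
    apply lp.ext; funext i; exact (f i).apply_symm_apply (x i)
  norm_map' x := norm_of_norm x (Equiv.refl _) _ fun i => (f i).norm_map _

/-- permutation of the blocks -/
noncomputable def prm (σ : ℕ × ℤ ≃ ℕ × ℤ) : MM ≃ₗᵢ[ℂ] MM where
  toFun x := ⟨fun i => x (σ i), memlp_of_norm x σ _ fun i => rfl⟩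
  invFun x := ⟨fun i => x (σ.symm i), memlp_of_norm x σ.symm _ fun i => rfl⟩
  map_add' x y := rfl
  map_smul' c x := rfl
  left_inv x := by
    apply lp.ext; funext i; exact congrArg x (σ.apply_symm_apply i)
  right_inv x := by
    apply lp.ext; funext i; exact congrArg x (σ.symm_apply_apply i)
  norm_map' x := norm_of_norm x σ _ fun i => rfl

theorem blk_apply (f : ℕ × ℤ → (EE ≃ₗᵢ[ℂ] EE)) (x : MM) (i : ℕ × ℤ) :
    blk f x i = f i (x i) := rfl

theorem comm_apply (f : ℕ × ℤ → (EE ≃ₗᵢ[ℂ] EE)) (σ : ℕ × ℤ ≃ ℕ × ℤ) :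
    blk f * prm σ * (blk f)⁻¹ * (prm σ)⁻¹ = blk (fun i => f i * (f (σ i))⁻¹) := by
  ext1 x
  apply lp.ext
  funext i
  change f i ((f (σ i)).symm (x (σ.symm (σ i)))) = f i ((f (σ i)).symm (x i))
  rw [Equiv.symm_apply_apply]

/-- shift of the `m`-th row -/
def sh (m : ℕ) : ℕ × ℤ ≃ ℕ × ℤ :=
  Equiv.prodShear (Equiv.refl ℕ) (fun n => if n = m then Equiv.addRight (-1) else Equiv.refl ℤ)

theorem step12 (W : ℕ → Set (MM ≃ₗᵢ[ℂ] MM)) (hm : Monotone W)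
    (hi : ∀ n, ∀ g ∈ W n, g⁻¹ ∈ W n)
    (hmul : ∀ n, ∀ g ∈ W n, ∀ h ∈ W n, g * h ∈ W (n + 1)) (hu : ∀ g, ∃ n, g ∈ W n) :
    ∃ j : ℕ × ℤ, Bd W (Set.range fun u : EE ≃ₗᵢ[ℂ] EE => blk (fun i => if i = j then u else 1)) := by
  have h1 : ∃ m, ∀ u : EE ≃ₗᵢ[ℂ] EE, ∃ f : ℕ × ℤ → (EE ≃ₗᵢ[ℂ] EE), blk f ∈ W m ∧
      ∀ k : ℤ, f (m, k) = if 0 ≤ k then u else 1 := by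
    by_contra! hcon
    choose u hu' using hcon
    obtain ⟨m, hmem⟩ := hu (blk fun i => if 0 ≤ i.2 then u i.1 else 1)
    obtain ⟨k, hk⟩ := hu' m _ hmem
    exact hk rfl
  obtain ⟨m, hm1⟩ := h1
  have hWm : Bd W (W m) := ⟨m, fun g hg => hg⟩
  refine ⟨(m, 0), (((hWm.mul hm hmul (Bd.single hu (prm (sh m)))).mul hm hmul (hWm.inv hi)).mul
    hm hmul (Bd.single hu (prm (sh m))⁻¹)).mono ?_⟩
  rintro _ ⟨u, rfl⟩
  obtain ⟨f, hf, hfu⟩ := hm1 u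
  refine ⟨blk f * prm (sh m) * (blk f)⁻¹, ⟨blk f * prm (sh m), ⟨blk f, hf, _, rfl, rfl⟩, (blk f)⁻¹,
    by simpa using hf, rfl⟩, _, rfl, ?_⟩
  change blk f * prm (sh m) * (blk f)⁻¹ * (prm (sh m))⁻¹ = _
  rw [comm_apply]
  congr 1
  funext i
  obtain ⟨n, k⟩ := i
  by_cases hn : n = m
  · subst hn
    have : sh n (n, k) = (n, k + -1) := by simp [sh]
    rw [this, hfu, hfu]
    rcases lt_trichotomy k 0 with h | h | h
    · rw [if_neg (by omega), if_neg (by omega), if_neg (by simp; omega)]; simp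
    · subst h; simp
    · rw [if_pos (by omega), if_pos (by omega), if_neg (by simp; omega)]; simp
  · have : sh m (n, k) = (n, k) := by simp [sh, hn]
    rw [this, if_neg (by simp [hn])]; simp

/-- the standard basis vectors of `MM` -/
noncomputable def bv (p : (ℕ × ℤ) × ℕ) : MM := lp.single 2 p.1 (lp.single 2 p.2 (1 : ℂ) : EE)

theorem inner_bv (p : (ℕ × ℤ) × ℕ) (x : MM) : inner ℂ (bv p) x = x p.1 p.2 := by
  rw [bv, lp.inner_single_left, lp.inner_single_left]
  simp

theorem bv_orthonormal : Orthonormal ℂ bv := by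
  rw [orthonormal_iff_ite]
  rintro ⟨i, n⟩ ⟨j, m⟩
  rw [inner_bv]
  simp only [bv]
  by_cases hij : i = j
  · subst hij
    rw [lp.single_apply_self]
    by_cases hnm : n = m
    · subst hnm; rw [lp.single_apply_self]; simp
    · rw [lp.single_apply_ne _ _ _ hnm]; simp [hnm]
  · rw [lp.single_apply_ne _ _ _ hij]; simp [hij]

theorem bv_bot : (span ℂ (Set.range bv))ᗮ = ⊥ := by
  rw [eq_bot_iff]
  intro x hx
  rw [mem_orthogonal] at hx
  rw [mem_bot]
  apply lp.ext; funext i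
  apply lp.ext; funext n
  have := hx _ (subset_span ⟨(i, n), rfl⟩)
  rwa [inner_bv] at this

/-- the standard Hilbert basis of `MM` -/
noncomputable def hb : HilbertBasis ((ℕ × ℤ) × ℕ) ℂ MM :=
  HilbertBasis.mkOfOrthogonalEqBot bv_orthonormal bv_bot

theorem hb_apply (p) : hb p = bv p := by
  rw [hb, HilbertBasis.coe_mkOfOrthogonalEqBot]

/-- index set off block `j` -/
abbrev Off (j : ℕ × ℤ) : Type := {i : ℕ × ℤ // i ≠ j} × ℕ

/-- basis vectors off block `j` -/
noncomputable def sv (j : ℕ × ℤ) (p : Off j) : MM := bv (p.1.1, p.2)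

theorem map_single (j : ℕ × ℤ) (g : MM ≃ₗᵢ[ℂ] MM) (hg : g ∈ fixer (sv j)) (x : EE) :
    g (lp.single 2 j x) = lp.single 2 j (g (lp.single 2 j x) j) := by
  apply lp.ext; funext i
  by_cases hij : i = j
  · subst hij; rw [lp.single_apply_self]
  · rw [lp.single_apply_ne _ _ _ hij]
    apply lp.ext; funext n
    have h1 := hg (⟨i, hij⟩, n)
    have h2 := inner_bv (i, n) (g (lp.single 2 j x))
    change g (bv (i, n)) = bv (i, n) at h1
    rw [← h1, g.inner_map_map, inner_bv, lp.single_apply_ne _ _ _ hij] at h2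
    exact h2.symm

theorem fixer_inv {K ι : Type*} [NormedAddCommGroup K] [InnerProductSpace ℂ K] {s : ι → K}
    {g : K ≃ₗᵢ[ℂ] K} (hg : g ∈ fixer s) : g.symm ∈ fixer s := fun i => by
  conv_lhs => rw [← hg i]
  rw [g.symm_apply_apply]

theorem fixer_sub (j : ℕ × ℤ) (g : MM ≃ₗᵢ[ℂ] MM) (hg : g ∈ fixer (sv j)) :
    ∃ u : EE ≃ₗᵢ[ℂ] EE, blk (fun i => if i = j then u else 1) = g := by
  let u : EE ≃ₗᵢ[ℂ] EE :=
    { toFun := fun x => g (lp.single 2 j x) j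
      invFun := fun x => g.symm (lp.single 2 j x) j
      map_add' := fun x y => by rw [lp.single_add, map_add]; rfl
      map_smul' := fun c x => by rw [lp.single_smul, map_smul]; rfl
      left_inv := fun x => by
        simp only []
        rw [← map_single j g hg, g.symm_apply_apply, lp.single_apply_self]
      right_inv := fun x => by
        simp only []
        rw [← map_single j g.symm (fixer_inv hg), g.apply_symm_apply, lp.single_apply_self]
      norm_map' := fun x => by
        change ‖g (lp.single 2 j x) j‖ = ‖x‖
        have h := congrArg norm (map_single j g hg x)
        rw [g.norm_map, lp.norm_single (by norm_num), lp.norm_single (by norm_num)] at h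
        exact h.symm }
  refine ⟨u, hb_ext hb _ _ ?_⟩
  rintro ⟨i, n⟩
  rw [hb_apply]
  by_cases hij : i = j
  · subst hij
    change _ = g (lp.single 2 i _)
    rw [map_single i g hg]
    apply lp.ext; funext k
    rw [blk_apply]
    by_cases hk : k = i
    · subst hk
      rw [if_pos rfl, lp.single_apply_self, bv, lp.single_apply_self]; rfl
    · rw [if_neg hk, lp.single_apply_ne _ _ _ hk, bv, lp.single_apply_ne _ _ _ hk]; simp
  · have h1 := hg (⟨i, hij⟩, n)
    change g (bv (i, n)) = bv (i, n) at h1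
    rw [h1]
    apply lp.ext; funext k
    rw [blk_apply]
    by_cases hk : k = j
    · subst hk
      rw [bv, lp.single_apply_ne _ _ _ (Ne.symm hij)]; simp
    · rw [if_neg hk]; rfl

theorem berg_MM [TopologicalSpace.SeparableSpace MM] (hK : ¬ FiniteDimensional ℂ MM) :
    Berg (MM ≃ₗᵢ[ℂ] MM) := by
  intro W hm hi hmul hu
  obtain ⟨j, hj⟩ := step12 W hm hi hmul hu
  have hinf : Infinite (Off j) := by
    have : Nonempty {i : ℕ × ℤ // i ≠ j} := ⟨⟨(j.1 + 1, j.2), by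
      intro h; have := congrArg Prod.fst h; simp at this⟩⟩
    infer_instance
  obtain ⟨e⟩ := nonempty_equiv_of_countable (α := ℕ) (β := Off j)
  refine step3 hK W hm hi hmul hu e (sv j) (fun n => bv (j, n)) ?_ ?_ ?_ (hj.mono ?_)
  · refine bv_orthonormal.comp (fun p : Off j => (p.1.1, p.2)) ?_
    rintro ⟨⟨a, ha⟩, n⟩ ⟨⟨b, hb⟩, m⟩ h
    simpa using h
  · exact bv_orthonormal.comp _ (fun a b h => by simpa using h)
  · rintro ⟨⟨a, ha⟩, n⟩ m
    exact bv_orthonormal.2 (by simp [ha])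
  · intro g hg
    exact fixer_sub j g hg

theorem berg_unitary (H : Type*) [NormedAddCommGroup H] [InnerProductSpace ℂ H] [CompleteSpace H]
    [TopologicalSpace.SeparableSpace H] (hH : ¬ FiniteDimensional ℂ H) :
    Berg (unitary (H →L[ℂ] H)) := by
  obtain ⟨b0⟩ := hb_nat hH
  obtain ⟨e⟩ := nonempty_equiv_of_countable (α := (ℕ × ℤ) × ℕ) (β := ℕ)
  obtain ⟨b, -⟩ := hb_reindex b0 e
  let T : H ≃ₗᵢ[ℂ] MM := b.repr.trans hb.repr.symm
  have : TopologicalSpace.SeparableSpace MM := T.surjective.denseRange.separableSpace T.continuous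
  have hM : ¬ FiniteDimensional ℂ MM := fun h =>
    hH (Module.Finite.equiv T.symm.toLinearEquiv)
  have e2 : (H ≃ₗᵢ[ℂ] H) ≃* (MM ≃ₗᵢ[ℂ] MM) :=
    { toFun := fun g => (T.symm.trans g).trans T
      invFun := fun g => (T.trans g).trans T.symm
      left_inv := fun g => by ext x; simp
      right_inv := fun g => by ext1 x; simp
      map_mul' := fun g h => by
        ext1 x
        change T (g (h (T.symm x))) = T (g (T.symm (T (h (T.symm x)))))
        rw [T.symm_apply_apply] }
  exact (Berg.transfer e2 (berg_MM hM)).transfer Unitary.linearIsometryEquiv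

end step1

section final
variable {G : Type*} [Group G]

theorem Berg.cofinality (h : Berg G) : UncountableCofinality G := by
  rintro ⟨H, h1, h2, h3⟩
  obtain ⟨n, hn⟩ := h (fun n => H n) (fun a b hab => monotone_nat_of_le_succ (fun n => (h1 n).le) hab)
    (fun n g hg => (H n).inv_mem hg)
    (fun n g hg k hk => (h1 n).le ((H n).mul_mem hg hk))
    (fun g => by simpa using (h3.symm ▸ Set.mem_univ g : g ∈ ⋃ n, (H n : Set G)))
  exact h2 n (eq_top_iff.2 fun g _ => hn g)

theorem Berg.cayley (h : Berg G) : CayleyBounded G := by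
  intro E h1 hE hcl
  have hinv : ∀ n : ℕ, ∀ g ∈ E ^ n, g⁻¹ ∈ E ^ n := by
    intro n g hg
    have : (E ^ n)⁻¹ = E ^ n := by rw [← inv_pow, hE]
    rw [← this]
    simpa using hg
  have hmono : ∀ {a b : ℕ}, a ≤ b → E ^ a ⊆ E ^ b := fun hab => Set.pow_subset_pow_right h1 hab
  obtain ⟨n, hn⟩ := h (fun n => E ^ (2 ^ n))
    (fun a b hab => hmono (Nat.pow_le_pow_right (by norm_num) hab))
    (fun n g hg => hinv _ g hg)
    (fun n g hg k hk => by
      change _ ∈ E ^ (2 ^ (n + 1))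
      rw [pow_succ, mul_two, pow_add]
      exact Set.mul_mem_mul hg hk)
    (fun g => by
      have hg : g ∈ Subgroup.closure E := by rw [hcl]; trivial
      have : ∃ m : ℕ, g ∈ E ^ m := by
        induction hg using Subgroup.closure_induction with
        | mem x hx => exact ⟨1, by simpa using hx⟩
        | one => exact ⟨0, by simp⟩
        | mul x y _ _ hx hy =>
          obtain ⟨a, ha⟩ := hx
          obtain ⟨b, hb⟩ := hy
          exact ⟨a + b, by rw [pow_add]; exact Set.mul_mem_mul ha hb⟩
        | inv x _ hx =>
          obtain ⟨a, ha⟩ := hx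
          exact ⟨a, hinv _ _ ha⟩
      obtain ⟨m, hm⟩ := this
      exact ⟨m, hmono (Nat.lt_two_pow_self).le hm⟩)
  exact ⟨2 ^ n, Set.eq_univ_of_forall hn⟩

theorem Berg.orbits (h : Berg G) (X : Type) [MetricSpace X] (φ : G →* (X ≃ᵢ X)) (x : X) :
    Bornology.IsBounded (Set.range fun g : G => φ g x) := by
  obtain ⟨n, hn⟩ := h (fun n => {g | dist (φ g x) x ≤ 2 ^ n})
    (fun a b hab g hg => by
      have h1 : dist (φ g x) x ≤ 2 ^ a := hg
      exact h1.trans (pow_le_pow_right₀ (one_le_two (α := ℝ)) hab))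
    (fun n g hg => by
      change dist (φ g⁻¹ x) x ≤ 2 ^ n
      have h2 : φ g (φ g⁻¹ x) = x := by
        rw [← IsometryEquiv.mul_apply, ← map_mul]; simp
      rw [← (φ g).dist_eq, h2, dist_comm]
      exact hg)
    (fun n g hg k hk => by
      change dist (φ (g * k) x) x ≤ 2 ^ (n + 1)
      rw [map_mul, IsometryEquiv.mul_apply]
      have h2 := dist_triangle (φ g (φ k x)) (φ g x) x
      rw [(φ g).dist_eq] at h2
      have h3 : dist (φ k x) x ≤ 2 ^ n := hk
      have h4 : dist (φ g x) x ≤ 2 ^ n := hg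
      rw [pow_succ]
      linarith)
    (fun g => by
      obtain ⟨n, hn⟩ := pow_unbounded_of_one_lt (dist (φ g x) x) (one_lt_two)
      exact ⟨n, hn.le⟩)
  refine (Metric.isBounded_closedBall (x := x) (r := 2 ^ n)).subset ?_
  rintro _ ⟨g, rfl⟩
  exact hn g

end final

end UB

/-- The unitary group of separable infinite-dimensional complex Hilbert space, as a
discrete group, is Cayley bounded and has uncountable cofinality; equivalently, every
action by isometries on a metric space has all orbits bounded. -/
theorem unitary_group_cayleyBounded_and_uncountableCofinality
    (H : Type*) [NormedAddCommGroup H] [InnerProductSpace ℂ H] [CompleteSpace H]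
    [TopologicalSpace.SeparableSpace H] (hH : ¬ FiniteDimensional ℂ H) :
    CayleyBounded (unitary (H →L[ℂ] H)) ∧
    UncountableCofinality (unitary (H →L[ℂ] H)) ∧
    ∀ (X : Type) [MetricSpace X] (φ : unitary (H →L[ℂ] H) →* (X ≃ᵢ X)) (x : X),
      Bornology.IsBounded (Set.range fun g : unitary (H →L[ℂ] H) => φ g x) := by
  have h := UB.berg_unitary H hH
  exact ⟨h.cayley, h.cofinality, fun X _ φ x => h.orbits X φ x⟩
end
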